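/- Define A₂(s, w, z) = ∑_{m, k primary, mk ≠ square} μ_{[i]}(k) L(s, χ̃_{mk}) / (N(m)^w N(k)^z) and C(s, w, z) = ∑_{q ≠ 0; m, k primary; mk ≠ square} μ_{[i]}(k) g(q, χ̃_{mk}) / (N(q)^s N(m)^w N(k)^z). Then, in the region where both sides are defined by absolute convergence or meromorphic continuation, A₂(s, w, z) = (4^{−s} π^{2s−1} Γ(1−s) / (4 Γ(s))) · C(1−s, s+w, s+z). -/

import Mathlib

open Complex Real Filter Topology
open scoped BigOperators Classical

noncomputable section

/-- The norm `N(n)` of a Gaussian integer, as a real number. -/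
def Nm (n : GaussianInt) : ℝ := ((Zsqrtd.norm n : ℤ) : ℝ)

/-- The element `1 + i` of `ℤ[i]`. -/
def ωg : GaussianInt := ⟨1, 1⟩

/-- The element `i` of `ℤ[i]`. -/
def ig : GaussianInt := ⟨0, 1⟩

/-- `n` is primary: `n ≡ 1 mod (1+i)³`. -/
def IsPrimary (n : GaussianInt) : Prop := ωg ^ 3 ∣ (n - 1)

/-- `ẽ(z) = exp(2πi(z/(2i) − z̄/(2i)))`. -/
def eT (z : ℂ) : ℂ :=
  Complex.exp (2 * (Real.pi : ℂ) * Complex.I *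
    (z / (2 * Complex.I) - (starRingEnd ℂ) z / (2 * Complex.I)))

/-- `χ a n = (a/n)` is the quadratic residue symbol of `ℤ[i]`: on odd primes `ϖ` it is
the `±1` (or `0`) value determined by `(a/ϖ) ≡ a^((N(ϖ)-1)/2) mod ϖ`, it is extended
multiplicatively in the denominator over odd elements, and equals `1` on units. -/
structure IsQuadSym (χ : GaussianInt → GaussianInt → ℤ) : Prop where
  val_prime : ∀ ϖ a : GaussianInt, Prime ϖ → ¬ ωg ∣ ϖ → ¬ ϖ ∣ a →
    (χ a ϖ = 1 ∨ χ a ϖ = -1) ∧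
      ϖ ∣ (a ^ (((Zsqrtd.norm ϖ).toNat - 1) / 2) - (χ a ϖ : GaussianInt))
  zero_of_dvd : ∀ ϖ a : GaussianInt, Prime ϖ → ϖ ∣ a → χ a ϖ = 0
  mul_den : ∀ a m n : GaussianInt, ¬ ωg ∣ m → ¬ ωg ∣ n → χ a (m * n) = χ a m * χ a n
  unit_den : ∀ a u : GaussianInt, IsUnit u → χ a u = 1

/-- `L s m = L(s, χ_m)`: the Hecke `L`-function attached to the quadratic symbol `(m/·)`,
given by its Dirichlet series over primary elements (= odd ideals) for `Re s > 1`,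
and analytic away from `s = 1`. -/
def IsHeckeL (χ : GaussianInt → GaussianInt → ℤ) (L : ℂ → GaussianInt → ℂ) : Prop :=
  (∀ (m : GaussianInt) (s : ℂ), 1 < s.re →
      L s m = ∑' n : {n : GaussianInt // IsPrimary n}, (χ m n.1 : ℂ) / (Nm n.1 : ℂ) ^ s) ∧
    ∀ m : GaussianInt, DifferentiableOn ℂ (fun s => L s m) {s : ℂ | s ≠ 1}

/-- The generalized Riemann hypothesis for the family of quadratic Hecke `L`-functions. -/
def GRHfor (L : ℂ → GaussianInt → ℂ) : Prop :=
  ∀ m : GaussianInt, m ≠ 0 → ∀ s : ℂ, 0 < s.re → s.re < 1 → L s m = 0 → s.re = 1 / 2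

/-- The absolute norm of an ideal of `ℤ[i]`, as a complex number. -/
def idN (I : Ideal GaussianInt) : ℂ := (Nat.card (GaussianInt ⧸ I) : ℂ)

/-- The Dedekind zeta function of `ℚ(i)`. -/
def IsDedekindZetaK (Z : ℂ → ℂ) : Prop :=
  (∀ s : ℂ, 1 < s.re → Z s = ∑' I : {I : Ideal GaussianInt // I ≠ ⊥}, idN I.1 ^ (-s)) ∧
    DifferentiableOn ℂ Z {s : ℂ | s ≠ 1}

/-- `ζ_K^{(2)}`: the Euler product of `ζ_K` with the factor at the prime `(1+i)` omitted. -/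
def zeta2 (Z : ℂ → ℂ) (s : ℂ) : ℂ := Z s * (1 - (2 : ℂ) ^ (-s))

/-- `P(z) = ∏_ϖ (1 + ((N(ϖ)^{z-1/2} − 1)(N(ϖ) + 1))⁻¹)`, over all primes of `ℤ[i]`. -/
def Pfun (z : ℂ) : ℂ :=
  ∏' I : {I : Ideal GaussianInt // I ≠ ⊥ ∧ I.IsPrime},
    (1 + 1 / ((idN I.1 ^ (z - 1 / 2) - 1) * (idN I.1 + 1)))

/-- The Euler product over odd primes appearing in the ratios-conjecture main term. -/
def ratioEuler (α β : ℂ) : ℂ :=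
  ∏' I : {I : Ideal GaussianInt // I ≠ ⊥ ∧ I.IsPrime ∧ (2 : GaussianInt) ∉ I},
    (1 + (idN I.1 ^ (α - β) - 1) / (idN I.1 ^ (1 + α - β) * (idN I.1 ^ (1 + α + β) - 1)))

/-- `g r n` is the quadratic Gauss sum `g(r,n) = ∑_{x mod n} (x/n) ẽ(rx/n)`:
for any complete residue system `S` modulo `n` it is given by the indicated finite sum. -/
def IsGaussSum (χ : GaussianInt → GaussianInt → ℤ) (g : GaussianInt → GaussianInt → ℂ) : Prop :=
  ∀ r n : GaussianInt, n ≠ 0 → ∀ S : Finset GaussianInt,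
    (∀ z : GaussianInt, ∃! x, x ∈ S ∧ n ∣ (z - x)) →
    g r n = ∑ x ∈ S, (χ x n : ℂ) * eT (GaussianInt.toComplex (r * x) / GaussianInt.toComplex n)

/-- A Dirichlet character modulo `q` on `ℤ[i]` (extended by zero). -/
def IsDirichletChar (q : GaussianInt) (χ : GaussianInt → ℂ) : Prop :=
  χ 1 = 1 ∧ (∀ a b : GaussianInt, χ (a * b) = χ a * χ b) ∧
    (∀ a b : GaussianInt, q ∣ (a - b) → χ a = χ b) ∧
    (∀ a : GaussianInt, IsCoprime a q → ‖χ a‖ = 1) ∧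
    (∀ a : GaussianInt, ¬ IsCoprime a q → χ a = 0)

/-- The Gauss sum `g(r,χ) = ∑_{x mod q} χ(x) ẽ(rx/q)` of a Dirichlet character modulo `q`. -/
def IsGaussSumChar (q : GaussianInt) (χ : GaussianInt → ℂ) (g : GaussianInt → ℂ) : Prop :=
  ∀ r : GaussianInt, ∀ S : Finset GaussianInt,
    (∀ z : GaussianInt, ∃! x, x ∈ S ∧ q ∣ (z - x)) →
    g r = ∑ x ∈ S, χ x * eT (GaussianInt.toComplex (r * x) / GaussianInt.toComplex q)

/-- A primary `n = a + bi` is of type 1 if `a ≡ 1, b ≡ 0 (mod 4)` (else it is of type 2). -/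
def IsTypeOne (n : GaussianInt) : Prop := n.re % 4 = 1 ∧ n.im % 4 = 0

/-- `ψ₁`, the principal character modulo `2` on `ℤ[i]`. -/
def psi1 (m : GaussianInt) : ℂ := if IsCoprime m 2 then 1 else 0

/-- `ψ₂`, the primitive quadratic character modulo `2` on `ℤ[i]`:
`ψ₂(m) = 1` for `m ≡ 1 (mod 2)`, `ψ₂(m) = −1` for `m ≡ i (mod 2)`, and `0` otherwise. -/
def psi2 (m : GaussianInt) : ℂ :=
  if (2 : GaussianInt) ∣ (m - 1) then 1 else if (2 : GaussianInt) ∣ (m - ig) then -1 else 0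

/-- `χ̃_n = ψ_j · (·/n)`, where `j` is the type of the primary element `n`. -/
def tchi (χ : GaussianInt → GaussianInt → ℤ) (n m : GaussianInt) : ℂ :=
  (if IsTypeOne n then psi1 m else psi2 m) * (χ m n : ℂ)

/-- The Möbius function `μ_{[i]}` on `ℤ[i]`. -/
def IsMobiusG (μ : GaussianInt → ℤ) : Prop :=
  μ 1 = 1 ∧ (∀ m n : GaussianInt, IsCoprime m n → μ (m * n) = μ m * μ n) ∧
    (∀ ϖ : GaussianInt, Prime ϖ → μ ϖ = -1) ∧
    (∀ (ϖ : GaussianInt) (k : ℕ), Prime ϖ → 2 ≤ k → μ (ϖ ^ k) = 0)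

/-- Pairs of primary elements whose product is not a perfect square. -/
abbrev NSqPairs : Type :=
  {p : GaussianInt × GaussianInt //
    IsPrimary p.1 ∧ IsPrimary p.2 ∧ ¬ ∃ r : GaussianInt, p.1 * p.2 = r ^ 2}

open HurwitzZeta Asymptotics Set MeasureTheory in
/-- product of two even kernels -/
def pairAB (a b : ℝ) : WeakFEPair ℂ where
  f := fun t => (evenKernel a t : ℂ) * (evenKernel b t : ℂ)
  g := fun t => (cosKernel a t : ℂ) * (cosKernel b t : ℂ)
  hf_int := ((continuous_ofReal.comp_continuousOn (continuousOn_evenKernel a)).mul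
    (continuous_ofReal.comp_continuousOn (continuousOn_evenKernel b))).locallyIntegrableOn
    measurableSet_Ioi
  hg_int := ((continuous_ofReal.comp_continuousOn (continuousOn_cosKernel a)).mul
    (continuous_ofReal.comp_continuousOn (continuousOn_cosKernel b))).locallyIntegrableOn
    measurableSet_Ioi
  k := 1
  hk := one_pos
  ε := 1
  hε := one_ne_zero
  f₀ := (hurwitzEvenFEPair a).f₀ * (hurwitzEvenFEPair b).f₀
  hf_top r := by
    have h1 := (hurwitzEvenFEPair a).hf_top
    have h2 := (hurwitzEvenFEPair b).hf_top
    have h3 : (hurwitzEvenFEPair b).f =O[atTop] (fun x : ℝ => x ^ (0:ℝ)) := by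
      have h4 : (fun _ : ℝ => (hurwitzEvenFEPair b).f₀) =O[atTop] (fun x : ℝ => x ^ (0:ℝ)) := by
        simp only [Real.rpow_zero]
        exact isBigO_const_const _ one_ne_zero _
      simpa using (h2 0).add h4
    have h6 := (h1 r).mul h3
    simp only [Real.rpow_zero, mul_one] at h6
    refine (h6.add ((h2 r).const_mul_left (hurwitzEvenFEPair a).f₀)).congr_left ?_
    intro x
    simp only [hurwitzEvenFEPair, Function.comp]
    ring
  g₀ := 1
  hg_top r := by
    have h1 := (hurwitzEvenFEPair a).hg_top
    have h2 := (hurwitzEvenFEPair b).hg_top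
    have h3 : (hurwitzEvenFEPair b).g =O[atTop] (fun x : ℝ => x ^ (0:ℝ)) := by
      have h4 : (fun _ : ℝ => (hurwitzEvenFEPair b).g₀) =O[atTop] (fun x : ℝ => x ^ (0:ℝ)) := by
        simp only [Real.rpow_zero]
        exact isBigO_const_const _ one_ne_zero _
      simpa using (h2 0).add h4
    have h6 := (h1 r).mul h3
    simp only [Real.rpow_zero, mul_one] at h6
    refine (h6.add ((h2 r).const_mul_left (hurwitzEvenFEPair a).g₀)).congr_left ?_
    intro x
    simp only [hurwitzEvenFEPair, Function.comp]
    ring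
  h_feq x hx := by
    have hx0 : (0:ℝ) < x := hx
    have h1 := (hurwitzEvenFEPair a).h_feq x hx
    have h2 := (hurwitzEvenFEPair b).h_feq x hx
    simp only [hurwitzEvenFEPair, Function.comp, smul_eq_mul, one_mul] at h1 h2 ⊢
    rw [h1, h2]
    have h3 : ((x ^ (1/2:ℝ) : ℝ) : ℂ) * ((x ^ (1/2:ℝ) : ℝ) : ℂ) = ((x ^ (1:ℝ) : ℝ) : ℂ) := by
      rw [← Complex.ofReal_mul, ← Real.rpow_add hx0]; norm_num
    rw [← h3]; ring


/-- indicator of the trivial class -/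
def zc (c : ℝ) : ℝ := if (c : UnitAddCircle) = 0 then (1:ℝ) else 0

/-- indicator of zero -/
def zt (x : ℝ) : ℝ := if x = 0 then (1:ℝ) else 0

lemma zt_nonneg (x : ℝ) : 0 ≤ zt x := by unfold zt; split_ifs <;> norm_num

lemma zCount (c : ℝ) : HasSum (fun n : ℤ => zt ((n:ℝ) + c)) (zc c) := by
    have := (HurwitzZeta.hasSum_int_evenKernel c one_pos).sub
      (HurwitzZeta.hasSum_int_evenKernel₀ c one_pos)
    rw [sub_sub_cancel] at this
    refine this.congr_fun fun n => ?_
    unfold zt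
    split_ifs with h
    · simp [h]
    · simp

open HurwitzZeta in
lemma pairAB_f_eq (a b t : ℝ) : (pairAB a b).f t - (pairAB a b).f₀ =
      ((evenKernel a t * evenKernel b t - zc a * zc b : ℝ) : ℂ) := by
  have e3 : (pairAB a b).f₀ = (hurwitzEvenFEPair a).f₀ * (hurwitzEvenFEPair b).f₀ := rfl
  have e5 : ∀ c : ℝ, (hurwitzEvenFEPair c).f₀ = (zc c : ℂ) := by
    intro c
    simp only [hurwitzEvenFEPair, zc]
    split_ifs <;> simp
  have e4 : (pairAB a b).f t = (evenKernel a t : ℂ) * (evenKernel b t : ℂ) := rfl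
  rw [e3, e4, e5, e5, Complex.ofReal_sub, Complex.ofReal_mul, Complex.ofReal_mul]

open HurwitzZeta in
lemma pairAB_g_eq (a b t : ℝ) : (pairAB a b).g t - (pairAB a b).g₀ =
    (cosKernel a t : ℂ) * (cosKernel b t : ℂ) - 1 := rfl

lemma f_aux (a b t : ℝ) (m : ℤ × ℤ) : (if ((m.1 + a)^2 + (m.2 + b)^2 : ℝ) = 0 then (0:ℂ) else
      (1:ℂ) * (rexp (-π * ((m.1 + a)^2 + (m.2 + b)^2) * t) : ℂ)) =
      ((rexp (-π * (m.1 + a) ^ 2 * t) * rexp (-π * (m.2 + b) ^ 2 * t) -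
       zt (m.1 + a : ℝ) * zt (m.2 + b : ℝ) : ℝ) : ℂ) := by
  by_cases h : ((m.1 + a)^2 + (m.2 + b)^2 : ℝ) = 0
  · have h1 : (m.1 + a : ℝ) = 0 := by nlinarith [sq_nonneg (m.1 + a : ℝ), sq_nonneg (m.2 + b : ℝ)]
    have h2 : (m.2 + b : ℝ) = 0 := by nlinarith [sq_nonneg (m.1 + a : ℝ), sq_nonneg (m.2 + b : ℝ)]
    simp [h1, h2, zt]
  · rw [if_neg h]
    have : ¬ ((m.1 + a : ℝ) = 0 ∧ (m.2 + b : ℝ) = 0) := by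
      rintro ⟨h1, h2⟩; apply h; rw [h1, h2]; norm_num
    have h0 : zt (m.1 + a : ℝ) * zt (m.2 + b : ℝ) = 0 := by
      unfold zt
      by_cases h1 : (m.1 + a : ℝ) = 0
      · have : (m.2 + b : ℝ) ≠ 0 := fun h => this ⟨h1, h⟩
        simp [this]
      · simp [h1]
    rw [h0, ← Real.exp_add, one_mul, sub_zero]
    congr 2; ring

/-- product of real sums with nonnegative terms -/
lemma hasSum_prod_real {f g : ℤ → ℝ} {u v : ℝ} (hf : HasSum f u) (hg : HasSum g v)
    (h1 : ∀ n, 0 ≤ f n) (h2 : ∀ n, 0 ≤ g n) :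
    HasSum (fun m : ℤ × ℤ => f m.1 * g m.2) (u * v) :=
  hf.mul hg (Summable.mul_of_nonneg hf.summable hg.summable h1 h2)

/-- product of complex sums -/
lemma hasSum_prod_complex {f g : ℤ → ℂ} {u v : ℂ} (hf : HasSum f u) (hg : HasSum g v) :
    HasSum (fun m : ℤ × ℤ => f m.1 * g m.2) (u * v) :=
  hf.mul hg (summable_mul_of_summable_norm hf.summable.norm hg.summable.norm)

open HurwitzZeta in
lemma pairAB_f_hasSum (a b t : ℝ) (ht : 0 < t) :
    HasSum (fun m : ℤ × ℤ => if ((m.1 + a)^2 + (m.2 + b)^2 : ℝ) = 0 then (0:ℂ) else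
      (1:ℂ) * (rexp (-π * ((m.1 + a)^2 + (m.2 + b)^2) * t) : ℂ))
      ((pairAB a b).f t - (pairAB a b).f₀) := by
  have h1 := hasSum_prod_real (hasSum_int_evenKernel a ht) (hasSum_int_evenKernel b ht)
    (fun _ => (Real.exp_pos _).le) (fun _ => (Real.exp_pos _).le)
  have h2 := hasSum_prod_real (zCount a) (zCount b) (fun _ => zt_nonneg _) (fun _ => zt_nonneg _)
  have h3 := Complex.hasSum_ofReal.mpr (h1.sub h2)
  rw [pairAB_f_eq]
  simp only [f_aux]
  exact h3

lemma g_aux (a b t : ℝ) (m : ℤ × ℤ) : (if ((m.1)^2 + (m.2)^2 : ℝ) = 0 then (0:ℂ) else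
      cexp (2 * π * I * (a * m.1 + b * m.2)) * (rexp (-π * ((m.1)^2 + (m.2)^2) * t) : ℂ)) =
      if m = (0, 0) then 0 else
      (cexp (2 * π * I * a * m.1) * rexp (-π * m.1 ^ 2 * t)) *
      (cexp (2 * π * I * b * m.2) * rexp (-π * m.2 ^ 2 * t)) := by
  by_cases h : ((m.1)^2 + (m.2)^2 : ℝ) = 0
  · have h1 : (m.1 : ℝ) = 0 := by nlinarith [sq_nonneg (m.1 : ℝ), sq_nonneg (m.2 : ℝ)]
    have h2 : (m.2 : ℝ) = 0 := by nlinarith [sq_nonneg (m.1 : ℝ), sq_nonneg (m.2 : ℝ)]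
    have : m = (0, 0) := by ext <;> [exact_mod_cast h1; exact_mod_cast h2]
    simp [this]
  · rw [if_neg h]
    have : m ≠ (0, 0) := by rintro rfl; simp at h
    rw [if_neg this]
    push_cast
    simp only [← Complex.exp_add]
    congr 1
    ring

open HurwitzZeta in
lemma pairAB_g_hasSum (a b t : ℝ) (ht : 0 < t) :
    HasSum (fun m : ℤ × ℤ => if ((m.1)^2 + (m.2)^2 : ℝ) = 0 then (0:ℂ) else
      cexp (2 * π * I * (a * m.1 + b * m.2)) * (rexp (-π * ((m.1)^2 + (m.2)^2) * t) : ℂ))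
      ((pairAB a b).g t - (pairAB a b).g₀) := by
  have ha := hasSum_int_cosKernel a ht
  have hb := hasSum_int_cosKernel b ht
  have h1 := hasSum_prod_complex ha hb
  have h3 := hasSum_ite_sub_hasSum h1 (0, 0)
  rw [pairAB_g_eq]
  have e : ∀ u : ℂ, u - 1 = u - (cexp (2 * π * I * a * ((0:ℤ) : ℂ)) * rexp (-π * ((0:ℤ):ℝ) ^ 2 * t)) *
      (cexp (2 * π * I * b * ((0:ℤ):ℂ)) * rexp (-π * ((0:ℤ):ℝ) ^ 2 * t)) := by
    intro u; simp
  rw [e]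
  simp only [g_aux]
  exact h3

lemma pairAB_Lambda (a b : ℝ) (s : ℂ) (hs : 1 < s.re)
    (hsum : Summable fun m : ℤ × ℤ => 1 / (((m.1 + a)^2 + (m.2 + b)^2 : ℝ)) ^ s.re) :
    HasSum (fun m : ℤ × ℤ => (π:ℂ) ^ (-s) * Complex.Gamma s * 1 /
      (((m.1 + a)^2 + (m.2 + b)^2 : ℝ) : ℂ) ^ s) ((pairAB a b).Λ s) := by
  rw [← ((pairAB a b).hasMellin (s := s) (by simpa [pairAB] using hs)).2]
  apply hasSum_mellin_pi_mul₀ (a := fun _ => 1)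
  · intro i; positivity
  · linarith
  · intro t ht
    exact pairAB_f_hasSum a b t ht
  · simpa using hsum

lemma pairAB_symm_Lambda (a b : ℝ) (s : ℂ) (hs : 1 < s.re)
    (hsum : Summable fun m : ℤ × ℤ => 1 / (((m.1)^2 + (m.2)^2 : ℝ)) ^ s.re) :
    HasSum (fun m : ℤ × ℤ => (π:ℂ) ^ (-s) * Complex.Gamma s * cexp (2 * π * I * (a * m.1 + b * m.2)) /
      (((m.1)^2 + (m.2)^2 : ℝ) : ℂ) ^ s) ((pairAB a b).symm.Λ s) := by
  rw [← ((pairAB a b).symm.hasMellin (s := s) (by simpa [pairAB] using hs)).2]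
  apply hasSum_mellin_pi_mul₀ (a := fun m : ℤ × ℤ => cexp (2 * π * I * (a * m.1 + b * m.2)))
    (p := fun m : ℤ × ℤ => ((m.1)^2 + (m.2)^2 : ℝ))
  · intro i; positivity
  · linarith
  · intro t ht
    exact pairAB_g_hasSum a b t ht
  · convert hsum using 3 with m
    rw [show 2 * π * I * (a * m.1 + b * m.2) = ((2 * π * (a * m.1 + b * m.2) : ℝ) : ℂ) * I by
      push_cast; ring, Complex.norm_exp_ofReal_mul_I]

lemma pairAB_FE (a b : ℝ) (s : ℂ) : (pairAB a b).Λ s = (pairAB a b).symm.Λ (1 - s) := by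
  have := (pairAB a b).functional_equation (1 - s)
  simpa [pairAB] using this

lemma pairAB_diff (a b : ℝ) (s : ℂ) (h0 : s ≠ 0) (h1 : s ≠ 1) :
    DifferentiableAt ℂ (pairAB a b).Λ s :=
  (pairAB a b).differentiableAt_Λ (Or.inl h0) (Or.inl (by simpa [pairAB] using h1))

/-- coordinates -/
def gEquiv : GaussianInt ≃ ℤ × ℤ where
  toFun m := (m.re, m.im)
  invFun p := ⟨p.1, p.2⟩
  left_inv _ := rfl
  right_inv _ := rfl

/-- swapped coordinates -/
def gEquivS : GaussianInt ≃ ℤ × ℤ where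
  toFun m := (m.im, m.re)
  invFun p := ⟨p.2, p.1⟩
  left_inv _ := rfl
  right_inv _ := rfl

lemma Nm_eq (n : GaussianInt) : Nm n = (n.re : ℝ)^2 + (n.im : ℝ)^2 := by
  simp only [Nm, Zsqrtd.norm_def]; push_cast; ring

lemma Nm_normSq (n : GaussianInt) : Nm n = Complex.normSq (GaussianInt.toComplex n) := by
  rw [Nm, GaussianInt.intCast_real_norm]

lemma Nm_mul (m n : GaussianInt) : Nm (m * n) = Nm m * Nm n := by
  simp [Nm, Zsqrtd.norm_mul]

lemma Nm_nonneg (n : GaussianInt) : 0 ≤ Nm n := by rw [Nm_eq]; positivity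

lemma Nm_pos {n : GaussianInt} (h : n ≠ 0) : 0 < Nm n := by
  unfold Nm; exact_mod_cast GaussianInt.norm_pos.mpr h

lemma Nm_zero : Nm 0 = 0 := by simp [Nm]

lemma Nm_one_le {n : GaussianInt} (h : n ≠ 0) : 1 ≤ Nm n := by
  unfold Nm; exact_mod_cast (GaussianInt.norm_pos.mpr h : 0 < Zsqrtd.norm n)

lemma summable_Nm {σ : ℝ} (hσ : 1 < σ) : Summable fun n : GaussianInt => 1 / (Nm n) ^ σ := by
  have h := EisensteinSeries.summable_one_div_norm_rpow (k := 2 * σ) (by linarith)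
  rw [← (gEquiv.trans (finTwoArrowEquiv ℤ).symm).summable_iff] at h
  refine Summable.of_nonneg_of_le (fun n => div_nonneg zero_le_one (Real.rpow_nonneg (Nm_nonneg n) _)) (fun n => ?_) h
  by_cases hn : n = 0
  · subst hn
    rw [Nm_zero, Real.zero_rpow (by linarith)]
    simp only [div_zero]
    exact Real.rpow_nonneg (norm_nonneg _) _
  · simp only [Function.comp]
    set v := (gEquiv.trans (finTwoArrowEquiv ℤ).symm) n with hv
    have hv0 : v 0 = n.re := rfl
    have hv1 : v 1 = n.im := rfl
    have hle : ‖v‖ ^ 2 ≤ Nm n := by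
      have : ‖v‖ ≤ √(Nm n) := by
        rw [pi_norm_le_iff_of_nonneg (Real.sqrt_nonneg _)]
        intro i
        apply Real.le_sqrt_of_sq_le
        fin_cases i
        · simp only [Fin.zero_eta, hv0, Int.norm_eq_abs, sq_abs, Nm_eq]; nlinarith [sq_nonneg (n.im:ℝ)]
        · simp only [Fin.mk_one, hv1, Int.norm_eq_abs, sq_abs, Nm_eq]; nlinarith [sq_nonneg (n.re:ℝ)]
      calc ‖v‖^2 ≤ (√(Nm n))^2 := by gcongr
        _ = Nm n := Real.sq_sqrt (Nm_nonneg n)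
    have hvne : 0 < ‖v‖ := by
      rw [norm_pos_iff]
      intro h0
      apply hn
      apply (gEquiv.trans (finTwoArrowEquiv ℤ).symm).injective
      rw [← hv, h0]
      funext i; fin_cases i <;> rfl
    rw [Real.rpow_neg hvne.le, Real.rpow_mul hvne.le, one_div]
    gcongr
    exact_mod_cast hle

/-- Completed partial zeta of the class of `x` modulo `M`. -/
def pairX (x M : GaussianInt) : WeakFEPair ℂ :=
  pairAB (GaussianInt.toComplex x / GaussianInt.toComplex M).re
    (GaussianInt.toComplex x / GaussianInt.toComplex M).im

lemma dist_eq (x M : GaussianInt) (hM : M ≠ 0) (m : GaussianInt) :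
    ((m.re : ℝ) + (GaussianInt.toComplex x / GaussianInt.toComplex M).re)^2 +
    ((m.im : ℝ) + (GaussianInt.toComplex x / GaussianInt.toComplex M).im)^2 =
    Nm (x + M * m) / Nm M := by
  have hM' : GaussianInt.toComplex M ≠ 0 := by
    rw [Ne, GaussianInt.toComplex_eq_zero]; exact hM
  rw [Nm_normSq, Nm_normSq, ← Complex.normSq_div]
  have : GaussianInt.toComplex (x + M * m) / GaussianInt.toComplex M =
      GaussianInt.toComplex m + GaussianInt.toComplex x / GaussianInt.toComplex M := by
    simp only [map_add, map_mul]; field_simp; ring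
  rw [this, Complex.normSq_apply, Complex.add_re, Complex.add_im,
    ← GaussianInt.intCast_re, ← GaussianInt.intCast_im]
  ring

lemma shift_inj (x M : GaussianInt) (hM : M ≠ 0) :
    Function.Injective fun m : GaussianInt => x + M * m := by
  intro a b h
  exact mul_left_cancel₀ hM (add_left_cancel h)

lemma pairX_Lambda (x M : GaussianInt) (hM : M ≠ 0) (s : ℂ) (hs : 1 < s.re) :
    HasSum (fun m : GaussianInt => (π:ℂ) ^ (-s) * Complex.Gamma s * (Nm M : ℂ) ^ s *
      (1 / (Nm (x + M * m) : ℂ) ^ s)) ((pairX x M).Λ s) := by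
  have hN := Nm_pos hM
  have h := pairAB_Lambda (GaussianInt.toComplex x / GaussianInt.toComplex M).re
    (GaussianInt.toComplex x / GaussianInt.toComplex M).im s hs ?_
  · rw [← gEquiv.hasSum_iff] at h
    refine h.congr_fun fun m => ?_
    simp only [Function.comp, gEquiv, Equiv.coe_fn_mk]
    rw [dist_eq x M hM, div_eq_mul_inv (Nm _), mul_comm (Nm _), Complex.ofReal_mul,
      Complex.mul_cpow_ofReal_nonneg (inv_nonneg.mpr hN.le) (Nm_nonneg _), Complex.ofReal_inv,
      Complex.inv_cpow]
    · rw [mul_one, div_eq_mul_inv (_ * _), mul_inv, inv_inv]; ring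
    · rw [Complex.arg_ofReal_of_nonneg hN.le]; exact Real.pi_pos.ne
  · rw [← gEquiv.summable_iff]
    have h1 := ((summable_Nm hs).comp_injective (shift_inj x M hM)).mul_left (Nm M ^ s.re)
    refine h1.congr fun m => ?_
    simp only [Function.comp, gEquiv, Equiv.coe_fn_mk]
    rw [dist_eq x M hM, Real.div_rpow (Nm_nonneg _) hN.le]
    rw [one_div_div, mul_one_div]

lemma eT_eq (z : ℂ) : eT z = cexp (2 * π * I * (z.im : ℂ)) := by
  unfold eT
  congr 2
  rw [← sub_div, Complex.sub_conj]
  field_simp [Complex.I_ne_zero]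
  push_cast; ring

lemma eT_norm (z : ℂ) : ‖eT z‖ = 1 := by
  rw [eT_eq, show 2 * π * I * (z.im : ℂ) = ((2 * π * z.im : ℝ) : ℂ) * I by push_cast; ring,
    Complex.norm_exp_ofReal_mul_I]

lemma pairX_symm_Lambda (x M : GaussianInt) (s : ℂ) (hs : 1 < s.re) :
    HasSum (fun q : GaussianInt => (π:ℂ) ^ (-s) * Complex.Gamma s *
      (eT (GaussianInt.toComplex (q * x) / GaussianInt.toComplex M) / (Nm q : ℂ) ^ s))
      ((pairX x M).symm.Λ s) := by
  have h := pairAB_symm_Lambda (GaussianInt.toComplex x / GaussianInt.toComplex M).re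
    (GaussianInt.toComplex x / GaussianInt.toComplex M).im s hs ?_
  · rw [← gEquivS.hasSum_iff] at h
    refine h.congr_fun fun m => ?_
    simp only [Function.comp, gEquivS, Equiv.coe_fn_mk]
    rw [Nm_eq, add_comm ((m.re:ℝ)^2), eT_eq, mul_div_assoc]
    congr 4
    rw [map_mul, mul_div_assoc, Complex.mul_im, ← GaussianInt.intCast_re, ← GaussianInt.intCast_im]
    push_cast
    ring
  · rw [← gEquivS.summable_iff]
    refine (summable_Nm hs).congr fun m => ?_
    simp only [Function.comp, gEquivS, Equiv.coe_fn_mk]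
    rw [Nm_eq, add_comm]

/-- complete residue systems -/
def IsRes (M : GaussianInt) (S : Finset GaussianInt) : Prop :=
  ∀ z : GaussianInt, ∃! x, x ∈ S ∧ M ∣ (z - x)

lemma tsum_residues (M : GaussianInt) (hM : M ≠ 0) (S : Finset GaussianInt) (hS : IsRes M S)
    (F : GaussianInt → ℂ) (hF : Summable F) :
    ∑' n, F n = ∑ x ∈ S, ∑' m, F (x + M * m) := by
  have hbij : Function.Bijective (fun p : S × GaussianInt => (p.1 : GaussianInt) + M * p.2) := by
    constructor
    · rintro ⟨⟨x, hx⟩, m⟩ ⟨⟨y, hy⟩, n⟩ h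
      simp only at h
      have : x = y := by
        refine (hS (x + M * m)).unique ⟨hx, ⟨m, by ring⟩⟩ ⟨hy, ⟨n, by rw [h]; ring⟩⟩
      subst this
      have := shift_inj x M hM h
      simp_all
    · intro z
      obtain ⟨x, ⟨hx, m, hm⟩, -⟩ := hS z
      exact ⟨⟨⟨x, hx⟩, m⟩, by simp only; rw [← hm]; ring⟩
  rw [← (Equiv.ofBijective _ hbij).tsum_eq]
  have hs := (Equiv.ofBijective _ hbij).summable_iff.mpr hF
  have h2 := Summable.tsum_prod hs
  simp only [Function.comp_def] at h2
  rw [h2, tsum_fintype]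
  simp only [Equiv.ofBijective_apply]
  exact Finset.sum_coe_sort S (fun x => ∑' m, F (x + M * m))

lemma exists_res (M : GaussianInt) (hM : M ≠ 0) :
    ∃ S : Finset GaussianInt, IsRes M S ∧ (S.card : ℝ) ≤ 9 * Nm M := by
  let mk := Ideal.Quotient.mk (Ideal.span {M})
  let τ : (GaussianInt ⧸ Ideal.span {M}) → GaussianInt := fun c => (Quotient.out c) % M
  have hmk : ∀ a b, mk a = mk b ↔ M ∣ a - b := by
    intro a b
    rw [Ideal.Quotient.eq, Ideal.mem_span_singleton]
  have hτ : ∀ c, mk (τ c) = c := by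
    intro c
    have h1 : mk (Quotient.out c) = c := Quotient.out_eq c
    conv_rhs => rw [← h1]
    rw [hmk]
    simp only [τ, GaussianInt.mod_def]
    exact ⟨-(Quotient.out c / M), by ring⟩
  set K : ℕ := Nat.sqrt (Zsqrtd.norm M).toNat with hK
  have hKN : (K:ℝ)^2 ≤ Nm M := by
    have h1 : K ^ 2 ≤ (Zsqrtd.norm M).toNat := Nat.sqrt_le' _
    have h2 : ((K:ℤ)) ^ 2 ≤ Zsqrtd.norm M := by
      have := GaussianInt.norm_nonneg M
      zify at h1
      rwa [Int.toNat_of_nonneg this] at h1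
    unfold Nm
    exact_mod_cast h2
  let box : Finset GaussianInt :=
    ((Finset.Icc (-(K:ℤ)) K) ×ˢ (Finset.Icc (-(K:ℤ)) K)).map gEquiv.symm.toEmbedding
  have hbox : ∀ c, τ c ∈ box := by
    intro c
    have hlt : (τ c).norm < M.norm := GaussianInt.norm_mod_lt _ hM
    have hre : ∀ r : ℤ, r^2 ≤ (τ c).norm → r ∈ Finset.Icc (-(K:ℤ)) K := by
      intro r hr
      rw [Finset.mem_Icc, ← abs_le]
      have : r.natAbs ≤ K := by
        rw [hK, Nat.le_sqrt']
        zify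
        rw [Int.toNat_of_nonneg (GaussianInt.norm_nonneg M), sq_abs]
        linarith
      zify at this
      exact this
    simp only [box, Finset.mem_map_equiv, Equiv.symm_symm, Finset.mem_product]
    refine ⟨hre _ ?_, hre _ ?_⟩ <;> simp only [gEquiv, Equiv.coe_fn_mk, Zsqrtd.norm_def]
    · nlinarith [sq_nonneg (τ c).im]
    · nlinarith [sq_nonneg (τ c).re]
  refine ⟨box.filter (fun x => τ (mk x) = x), ?_, ?_⟩
  · intro z
    refine ⟨τ (mk z), ⟨?_, ?_⟩, ?_⟩
    · rw [Finset.mem_filter]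
      exact ⟨hbox _, by rw [hτ]⟩
    · rw [← hmk, hτ]
    · rintro y ⟨hy, hd⟩
      rw [Finset.mem_filter] at hy
      rw [← hmk] at hd
      rw [hd, hy.2]
  · have h1 : (box.filter (fun x => τ (mk x) = x)).card ≤ (2 * K + 1) * (2 * K + 1) := by
      refine (Finset.card_filter_le _ _).trans ?_
      simp only [box, Finset.card_map, Finset.card_product, Int.card_Icc]
      apply le_of_eq
      congr 1 <;> omega
    have h2 : ((box.filter (fun x => τ (mk x) = x)).card : ℝ) ≤ (2 * K + 1) * (2 * K + 1) := by
      exact_mod_cast h1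
    have h3 := Nm_one_le hM
    nlinarith [sq_nonneg ((K:ℝ) - 1)]

lemma summable_f_Nm (f : GaussianInt → ℂ) (C : ℝ) (hf : ∀ n, ‖f n‖ ≤ C) (s : ℂ) (hs : 1 < s.re) :
    Summable fun n => f n / (Nm n : ℂ) ^ s := by
  refine Summable.of_norm_bounded ((summable_Nm hs).mul_left C) fun n => ?_
  by_cases hn : n = 0
  · subst hn
    have : s ≠ 0 := by rintro rfl; simp at hs; linarith
    rw [Nm_zero, Complex.ofReal_zero, Complex.zero_cpow this, Real.zero_rpow (by linarith)]
    simp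
  · rw [norm_div, Complex.norm_cpow_eq_rpow_re_of_pos (Nm_pos hn), mul_one_div]
    have := Real.rpow_pos_of_pos (Nm_pos hn) s.re
    gcongr
    exact hf n

theorem FE_general (M : GaussianInt) (hM : M ≠ 0) (f : GaussianInt → ℂ)
    (hper : ∀ a b, M ∣ a - b → f a = f b) (hf : ∀ n, ‖f n‖ ≤ 1)
    (L : ℂ → ℂ) (hL : Differentiable ℂ L)
    (hser : ∀ s : ℂ, 1 < s.re → L s = ∑' n, f n / (Nm n : ℂ) ^ s)
    (S : Finset GaussianInt) (hS : IsRes M S) (s : ℂ) (hs : s.re < 0) :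
    L s = (Nm M : ℂ) ^ (-s) * ((π:ℂ) ^ (2 * s - 1) * Complex.Gamma (1 - s) / Complex.Gamma s) *
      ∑' q : GaussianInt, (∑ x ∈ S, f x *
        eT (GaussianInt.toComplex (q * x) / GaussianInt.toComplex M)) / (Nm q : ℂ) ^ (1 - s) := by
  have hN := Nm_pos hM
  have hN0 : (Nm M : ℂ) ≠ 0 := by exact_mod_cast hN.ne'
  have hpi0 : (π : ℂ) ≠ 0 := by exact_mod_cast Real.pi_ne_zero
  let Lam : ℂ → ℂ := fun s => ∑ x ∈ S, f x * (pairX x M).Λ s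
  let R : ℂ → ℂ := fun s => (Complex.Gamma s)⁻¹ * (π:ℂ) ^ s * (Nm M : ℂ) ^ (-s) * Lam s
  have hR1 : ∀ s : ℂ, 1 < s.re → L s = R s := by
    intro s hs
    have hG : Complex.Gamma s ≠ 0 := Complex.Gamma_ne_zero_of_re_pos (by linarith)
    rw [hser s hs, tsum_residues M hM S hS _ (summable_f_Nm f 1 hf s hs)]
    have hx : ∀ x ∈ S, f x * (pairX x M).Λ s = (π:ℂ) ^ (-s) * Complex.Gamma s * (Nm M : ℂ) ^ s *
        ∑' m, f (x + M * m) / (Nm (x + M * m) : ℂ) ^ s := by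
      intro x hx
      rw [← (pairX_Lambda x M hM s hs).tsum_eq, ← tsum_mul_left, ← tsum_mul_left]
      refine tsum_congr fun m => ?_
      rw [hper (x + M * m) x ⟨m, by ring⟩]
      ring
    simp only [R, Lam]
    rw [Finset.sum_congr rfl hx, ← Finset.mul_sum]
    have e1 : (π:ℂ) ^ (-s) * (π:ℂ) ^ s = 1 := by
      rw [← Complex.cpow_add _ _ hpi0]; simp
    have e2 : (Nm M:ℂ) ^ (-s) * (Nm M:ℂ) ^ s = 1 := by
      rw [← Complex.cpow_add _ _ hN0]; simp
    have e3 := inv_mul_cancel₀ hG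
    set T := ∑ x ∈ S, ∑' m, f (x + M * m) / (Nm (x + M * m) : ℂ) ^ s
    calc T = ((Complex.Gamma s)⁻¹ * Complex.Gamma s) * ((π:ℂ) ^ (-s) * (π:ℂ) ^ s) *
          ((Nm M:ℂ) ^ (-s) * (Nm M:ℂ) ^ s) * T := by rw [e1, e2, e3]; ring
      _ = _ := by ring
  have hU : IsOpen ({0, 1}ᶜ : Set ℂ) := (Set.toFinite _).isClosed.isOpen_compl
  have hUc : IsPreconnected ({0, 1}ᶜ : Set ℂ) :=
    (Set.Countable.isConnected_compl_of_one_lt_rank (by simp) (Set.toFinite _).countable).2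
  have hRd : DifferentiableOn ℂ R ({0, 1}ᶜ : Set ℂ) := by
    intro z hz
    simp only [Set.mem_compl_iff, Set.mem_insert_iff, Set.mem_singleton_iff, not_or] at hz
    apply DifferentiableAt.differentiableWithinAt
    have h1 : DifferentiableAt ℂ (fun s => (Complex.Gamma s)⁻¹) z :=
      Complex.differentiable_one_div_Gamma z
    have h2 : DifferentiableAt ℂ (fun s : ℂ => (π:ℂ) ^ s) z :=
      differentiableAt_id.const_cpow (Or.inl hpi0)
    have h3 : DifferentiableAt ℂ (fun s : ℂ => (Nm M:ℂ) ^ (-s)) z :=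
      differentiableAt_id.neg.const_cpow (Or.inl hN0)
    have h4 : DifferentiableAt ℂ Lam z := by
      apply DifferentiableAt.fun_sum
      intro x _
      exact (pairAB_diff _ _ z hz.1 hz.2).const_mul _
    exact ((h1.mul h2).mul h3).mul h4
  have hEq : Set.EqOn L R ({0, 1}ᶜ : Set ℂ) := by
    refine (hL.differentiableOn.analyticOnNhd hU).eqOn_of_preconnected_of_eventuallyEq
      (hRd.analyticOnNhd hU) hUc (z₀ := 2) (by norm_num) ?_
    have : {s : ℂ | 1 < s.re} ∈ 𝓝 (2:ℂ) :=
      (isOpen_lt continuous_const Complex.continuous_re).mem_nhds (by simp)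
    filter_upwards [this] with s hs using hR1 s hs
  have hs01 : s ∈ ({0, 1}ᶜ : Set ℂ) := by
    simp only [Set.mem_compl_iff, Set.mem_insert_iff, Set.mem_singleton_iff, not_or]
    constructor <;> rintro rfl <;> norm_num at hs
  rw [hEq hs01]
  have hs1 : 1 < (1 - s).re := by simp only [Complex.sub_re, Complex.one_re]; linarith
  have hsumx : ∀ x ∈ S, Summable fun q : GaussianInt => f x *
      (eT (GaussianInt.toComplex (q * x) / GaussianInt.toComplex M) / (Nm q : ℂ) ^ (1 - s)) := by
    intro x _
    exact (summable_f_Nm _ 1 (fun q => (eT_norm _).le) (1 - s) hs1).mul_left _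
  have hLam : Lam s = (π:ℂ) ^ (-(1 - s)) * Complex.Gamma (1 - s) *
      ∑' q : GaussianInt, (∑ x ∈ S, f x *
        eT (GaussianInt.toComplex (q * x) / GaussianInt.toComplex M)) / (Nm q : ℂ) ^ (1 - s) := by
    have : ∀ q : GaussianInt, (∑ x ∈ S, f x *
        eT (GaussianInt.toComplex (q * x) / GaussianInt.toComplex M)) / (Nm q : ℂ) ^ (1 - s) =
        ∑ x ∈ S, f x * (eT (GaussianInt.toComplex (q * x) / GaussianInt.toComplex M) / (Nm q : ℂ) ^ (1 - s)) := by
      intro q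
      rw [Finset.sum_div]
      exact Finset.sum_congr rfl fun x _ => by ring
    simp only [this]
    rw [Summable.tsum_finsetSum hsumx, Finset.mul_sum]
    refine Finset.sum_congr rfl fun x _ => ?_
    have h1 : (pairX x M).Λ s = (pairX x M).symm.Λ (1 - s) := pairAB_FE _ _ s
    rw [h1, ← (pairX_symm_Lambda x M (1 - s) hs1).tsum_eq, ← tsum_mul_left, ← tsum_mul_left]
    refine tsum_congr fun q => ?_
    ring
  simp only [R]
  rw [hLam, show 2 * s - 1 = s + -(1 - s) by ring, Complex.cpow_add _ _ hpi0]
  ring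

lemma norm_int (n : GaussianInt) : Zsqrtd.norm n = n.re * n.re + n.im * n.im := by
  rw [Zsqrtd.norm_def]; ring

lemma omega_dvd_iff (n : GaussianInt) : ωg ∣ n ↔ (n.re + n.im) % 2 = 0 := by
  constructor
  · rintro ⟨c, rfl⟩
    simp only [ωg, Zsqrtd.re_mul, Zsqrtd.im_mul]
    omega
  · intro h
    refine ⟨⟨(n.re + n.im) / 2, (n.im - n.re) / 2⟩, ?_⟩
    apply Zsqrtd.ext
    · simp only [ωg, Zsqrtd.re_mul]; omega
    · simp only [ωg, Zsqrtd.im_mul]; omega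

lemma primary_iff (n : GaussianInt) : IsPrimary n ↔
    (n.re % 4 = 1 ∧ n.im % 4 = 0) ∨ (n.re % 4 = 3 ∧ n.im % 4 = 2) := by
  have e : ωg ^ 3 = ⟨-2, 2⟩ := by
    apply Zsqrtd.ext <;> simp [ωg, pow_succ]
  unfold IsPrimary
  rw [e]
  constructor
  · rintro ⟨c, hc⟩
    have h1 := congrArg Zsqrtd.re hc
    have h2 := congrArg Zsqrtd.im hc
    simp only [Zsqrtd.re_mul, Zsqrtd.im_mul, Zsqrtd.re_sub, Zsqrtd.im_sub, Zsqrtd.re_one,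
      Zsqrtd.im_one] at h1 h2
    omega
  · intro h
    refine ⟨⟨(n.im - (n.re - 1)) / 4, (-(n.re - 1) - n.im) / 4⟩, ?_⟩
    apply Zsqrtd.ext
    · simp only [Zsqrtd.re_mul, Zsqrtd.re_sub, Zsqrtd.re_one]; omega
    · simp only [Zsqrtd.im_mul, Zsqrtd.im_sub, Zsqrtd.im_one]; omega

lemma primary_odd {n : GaussianInt} (h : IsPrimary n) : ¬ ωg ∣ n := by
  rw [primary_iff] at h; rw [omega_dvd_iff]; omega

lemma primary_ne_zero {n : GaussianInt} (h : IsPrimary n) : n ≠ 0 := by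
  rintro rfl; rw [primary_iff] at h; simp at h

lemma primary_mul {m n : GaussianInt} (hm : IsPrimary m) (hn : IsPrimary n) : IsPrimary (m * n) := by
  unfold IsPrimary at *
  have : m * n - 1 = m * (n - 1) + (m - 1) := by ring
  rw [this]
  exact dvd_add (dvd_mul_of_dvd_right hn _) hm

lemma sq_mod8_odd (a : ℤ) (h : a % 2 = 1) : (a * a) % 8 = 1 := by
  have : a % 8 = 1 ∨ a % 8 = 3 ∨ a % 8 = 5 ∨ a % 8 = 7 := by omega
  rcases this with h | h | h | h <;> simp [Int.mul_emod, h]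

lemma sq_mod8_0 (a : ℤ) (h : a % 4 = 0) : (a * a) % 8 = 0 := by
  have : a % 8 = 0 ∨ a % 8 = 4 := by omega
  rcases this with h | h <;> simp [Int.mul_emod, h]

lemma sq_mod8_2 (a : ℤ) (h : a % 4 = 2) : (a * a) % 8 = 4 := by
  have : a % 8 = 2 ∨ a % 8 = 6 := by omega
  rcases this with h | h <;> simp [Int.mul_emod, h]

lemma sq_mod8_even (a : ℤ) (h : a % 2 = 0) : (a * a) % 8 = 0 ∨ (a * a) % 8 = 4 := by
  have : a % 4 = 0 ∨ a % 4 = 2 := by omega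
  rcases this with h | h
  · exact Or.inl (sq_mod8_0 a h)
  · exact Or.inr (sq_mod8_2 a h)

lemma odd_norm {n : GaussianInt} (h : ¬ ωg ∣ n) :
    Zsqrtd.norm n % 8 = 1 ∨ Zsqrtd.norm n % 8 = 5 := by
  rw [omega_dvd_iff] at h
  rw [norm_int]
  rcases Int.emod_two_eq_zero_or_one n.re with h1 | h1
  · have h2 := sq_mod8_odd n.im (by omega)
    rcases sq_mod8_even n.re h1 with h3 | h3 <;> omega
  · have h2 := sq_mod8_odd n.re h1
    rcases sq_mod8_even n.im (by omega) with h3 | h3 <;> omega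

lemma prime_not_dvd_two {p : GaussianInt} (hp : Prime p) (ho : ¬ ωg ∣ p) : ¬ p ∣ 2 := by
  rintro ⟨c, hc⟩
  have h1 := congrArg Zsqrtd.norm hc
  rw [Zsqrtd.norm_mul] at h1
  have h2 : Zsqrtd.norm (2 : GaussianInt) = 4 := by decide
  rw [h2] at h1
  have h3 : Zsqrtd.norm p ∣ 4 := ⟨_, h1⟩
  have h4 := Int.le_of_dvd (by norm_num) h3
  have h5 := GaussianInt.norm_pos.mpr hp.ne_zero
  have h6 := odd_norm ho
  have h7 : Zsqrtd.norm p = 1 := by omega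
  apply hp.not_isUnit
  rw [← Zsqrtd.norm_eq_one_iff, h7]; rfl

lemma sign_eq {p : GaussianInt} (hp : Prime p) (ho : ¬ ωg ∣ p) {e f : ℤ}
    (he : e = 1 ∨ e = -1) (hf : f = 1 ∨ f = -1)
    (h : p ∣ (e : GaussianInt) - (f : GaussianInt)) : e = f := by
  have h2 := prime_not_dvd_two hp ho
  rcases he with rfl | rfl <;> rcases hf with rfl | rfl
  · rfl
  · exfalso; apply h2; convert h using 1; push_cast; norm_num
  · exfalso; apply h2; rw [← dvd_neg]; convert h using 1; push_cast; norm_num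
  · rfl

lemma ig_sq : ig ^ 2 = -1 := by
  apply Zsqrtd.ext <;> simp [ig, pow_succ]

lemma ig_unit : IsUnit ig := by
  refine IsUnit.of_mul_eq_one (-ig) ?_
  have := ig_sq
  linear_combination -this

lemma chi_props (χ : GaussianInt → GaussianInt → ℤ) (hχ : IsQuadSym χ) (n : GaussianInt) :
    ¬ ωg ∣ n →
    (∀ a b, n ∣ a - b → χ a n = χ b n) ∧ (∀ a b, χ (a * b) n = χ a n * χ b n) ∧
    (∀ a, χ a n = 0 ∨ χ a n = 1 ∨ χ a n = -1) ∧
    χ ig n = if Zsqrtd.norm n % 8 = 1 then 1 else -1 := by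
  induction n using UniqueFactorizationMonoid.induction_on_prime with
  | h₁ => intro h; exact absurd (dvd_zero _) h
  | h₂ u hu =>
    intro _
    have h1 : Zsqrtd.norm u = 1 := by
      have h2 := (Zsqrtd.norm_eq_one_iff (x := u)).mpr hu
      have h3 := GaussianInt.norm_nonneg u
      omega
    have hc : ∀ a, χ a u = 1 := fun a => hχ.unit_den a u hu
    refine ⟨fun a b _ => by rw [hc, hc], fun a b => by rw [hc, hc, hc, one_mul],
      fun a => Or.inr (Or.inl (hc a)), ?_⟩
    rw [hc, h1, if_pos (by norm_num)]
  | h₃ a p ha hp ih =>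
    intro hodd
    have hpo : ¬ ωg ∣ p := fun h => hodd (dvd_mul_of_dvd_left h _)
    have hao : ¬ ωg ∣ a := fun h => hodd (dvd_mul_of_dvd_right h _)
    obtain ⟨i1, i2, i3, i4⟩ := ih hao
    set E := ((Zsqrtd.norm p).toNat - 1) / 2 with hE
    have q1 : ∀ x y, p ∣ x - y → χ x p = χ y p := by
      intro x y hxy
      by_cases hx : p ∣ x
      · have hy : p ∣ y := (dvd_sub_right hx).mp hxy
        rw [hχ.zero_of_dvd _ _ hp hx, hχ.zero_of_dvd _ _ hp hy]
      · have hy : ¬ p ∣ y := fun hy => hx ((dvd_sub_left hy).mp hxy)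
        obtain ⟨s1, t1⟩ := hχ.val_prime p x hp hpo hx
        obtain ⟨s2, t2⟩ := hχ.val_prime p y hp hpo hy
        refine sign_eq hp hpo s1 s2 ?_
        have h3 : p ∣ x ^ E - y ^ E := hxy.trans (sub_dvd_pow_sub_pow x y E)
        have := dvd_add (dvd_sub t2 t1) h3
        convert this using 1
        ring
    have q2 : ∀ x y, χ (x * y) p = χ x p * χ y p := by
      intro x y
      by_cases hx : p ∣ x
      · rw [hχ.zero_of_dvd _ _ hp hx, hχ.zero_of_dvd _ _ hp (dvd_mul_of_dvd_left hx _), zero_mul]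
      by_cases hy : p ∣ y
      · rw [hχ.zero_of_dvd _ _ hp hy, hχ.zero_of_dvd _ _ hp (dvd_mul_of_dvd_right hy _), mul_zero]
      have hxy : ¬ p ∣ x * y := hp.not_dvd_mul hx hy
      obtain ⟨s1, t1⟩ := hχ.val_prime p x hp hpo hx
      obtain ⟨s2, t2⟩ := hχ.val_prime p y hp hpo hy
      obtain ⟨s3, t3⟩ := hχ.val_prime p (x * y) hp hpo hxy
      refine sign_eq hp hpo s3 ?_ ?_
      · rcases s1 with h | h <;> rcases s2 with h' | h' <;> simp [h, h']
      · have := dvd_sub (dvd_add (dvd_mul_of_dvd_left t1 (y ^ E))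
          (dvd_mul_of_dvd_right t2 (χ x p : GaussianInt))) t3
        convert this using 1
        push_cast
        rw [mul_pow]
        ring
    have q3 : ∀ x, χ x p = 0 ∨ χ x p = 1 ∨ χ x p = -1 := by
      intro x
      by_cases hx : p ∣ x
      · exact Or.inl (hχ.zero_of_dvd _ _ hp hx)
      · exact Or.inr (hχ.val_prime p x hp hpo hx).1
    have q4 : χ ig p = if Zsqrtd.norm p % 8 = 1 then 1 else -1 := by
      have hnd : ¬ p ∣ ig := fun h => hp.not_isUnit (isUnit_of_dvd_unit h ig_unit)
      obtain ⟨s1, t1⟩ := hχ.val_prime p ig hp hpo hnd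
      have hpos := GaussianInt.norm_nonneg p
      refine sign_eq hp hpo s1 (by split_ifs <;> simp) ?_
      have : ig ^ E = ((if Zsqrtd.norm p % 8 = 1 then 1 else -1 : ℤ) : GaussianInt) := by
        rcases odd_norm hpo with h | h
        · rw [if_pos h]
          obtain ⟨k, hk⟩ : ∃ k, E = 2 * (2 * k) := ⟨E / 4, by omega⟩
          rw [hk, pow_mul, ig_sq, pow_mul]; norm_num
        · rw [if_neg (by omega)]
          obtain ⟨k, hk⟩ : ∃ k, E = 2 * (2 * k + 1) := ⟨E / 4, by omega⟩
          rw [hk, pow_mul, ig_sq, pow_succ, pow_mul]; norm_num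
      rw [← this, ← dvd_neg]
      convert t1 using 1
      ring
    have hm : ∀ x, χ x (p * a) = χ x p * χ x a := fun x => hχ.mul_den x p a hpo hao
    refine ⟨?_, ?_, ?_, ?_⟩
    · intro x y h
      rw [hm, hm, q1 x y ((dvd_mul_right p a).trans h), i1 x y ((dvd_mul_left a p).trans h)]
    · intro x y
      rw [hm, hm, hm, q2, i2]; ring
    · intro x
      rw [hm]
      rcases q3 x with h | h | h <;> rcases i3 x with h' | h' | h' <;> simp [h, h']
    · rw [hm, q4, i4, Zsqrtd.norm_mul]
      rcases odd_norm hpo with h | h <;> rcases odd_norm hao with h' | h' <;>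
        simp [Int.mul_emod, h, h']

lemma psi1_eq (m : GaussianInt) : psi1 m = if (m.re + m.im) % 2 = 1 then 1 else 0 := by
  unfold psi1
  have : IsCoprime m 2 ↔ (m.re + m.im) % 2 = 1 := by
    constructor
    · rintro ⟨a, b, h⟩
      have h1 := congrArg Zsqrtd.re h
      have h2 := congrArg Zsqrtd.im h
      by_contra hc
      have h3 : ωg ∣ m := by rw [omega_dvd_iff]; omega
      have h4 : ωg ∣ (2 : GaussianInt) := by rw [omega_dvd_iff]; rfl
      have h5 : ωg ∣ (1 : GaussianInt) := by
        rw [← h]; exact dvd_add (dvd_mul_of_dvd_right h3 _) (dvd_mul_of_dvd_right h4 _)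
      rw [omega_dvd_iff] at h5
      exact absurd h5 (by decide)
    · intro h
      have ho : ¬ ωg ∣ m := by rw [omega_dvd_iff]; omega
      obtain ⟨k, hk⟩ : ∃ k, Zsqrtd.norm m = 2 * k + 1 :=
        ⟨Zsqrtd.norm m / 2, by rcases odd_norm ho with h | h <;> omega⟩
      refine ⟨star m, -(k : GaussianInt), ?_⟩
      have := Zsqrtd.norm_eq_mul_conj m
      rw [hk] at this
      push_cast at this
      linear_combination -this
  simp only [this]

lemma two_dvd_iff (a : GaussianInt) : (2 : GaussianInt) ∣ a ↔ a.re % 2 = 0 ∧ a.im % 2 = 0 := by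
  have := Zsqrtd.intCast_dvd (d := -1) 2 a
  push_cast at this
  rw [this]; omega

lemma psi2_eq (m : GaussianInt) : psi2 m = if m.re % 2 = 1 ∧ m.im % 2 = 0 then 1 else
    if m.re % 2 = 0 ∧ m.im % 2 = 1 then -1 else 0 := by
  unfold psi2
  have h1 : (2 : GaussianInt) ∣ m - 1 ↔ m.re % 2 = 1 ∧ m.im % 2 = 0 := by
    rw [two_dvd_iff]; simp only [Zsqrtd.re_sub, Zsqrtd.im_sub, Zsqrtd.re_one, Zsqrtd.im_one]; omega
  have h2 : (2 : GaussianInt) ∣ m - ig ↔ m.re % 2 = 0 ∧ m.im % 2 = 1 := by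
    rw [two_dvd_iff]; simp only [Zsqrtd.re_sub, Zsqrtd.im_sub, ig]; omega
  simp only [h1, h2]

lemma ig_mul_re (m : GaussianInt) : (ig * m).re = - m.im := by simp [ig]
lemma ig_mul_im (m : GaussianInt) : (ig * m).im = m.re := by simp [ig]

lemma psi1_per {a b : GaussianInt} (h : (2 : GaussianInt) ∣ a - b) : psi1 a = psi1 b := by
  rw [two_dvd_iff] at h
  simp only [Zsqrtd.re_sub, Zsqrtd.im_sub] at h
  rw [psi1_eq, psi1_eq]
  congr 1
  apply propext; omega

lemma psi2_per {a b : GaussianInt} (h : (2 : GaussianInt) ∣ a - b) : psi2 a = psi2 b := by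
  rw [two_dvd_iff] at h
  simp only [Zsqrtd.re_sub, Zsqrtd.im_sub] at h
  have h1 : a.re % 2 = b.re % 2 := by omega
  have h2 : a.im % 2 = b.im % 2 := by omega
  rw [psi2_eq, psi2_eq, h1, h2]

lemma psi1_ig (m : GaussianInt) : psi1 (ig * m) = psi1 m := by
  rw [psi1_eq, psi1_eq, ig_mul_re, ig_mul_im]
  congr 1
  apply propext; omega

lemma psi2_ig (m : GaussianInt) : psi2 (ig * m) = - psi2 m := by
  rw [psi2_eq, psi2_eq, ig_mul_re, ig_mul_im]
  have e : (-m.im) % 2 = m.im % 2 := by omega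
  rw [e]
  rcases Int.emod_two_eq_zero_or_one m.re with h | h <;>
    rcases Int.emod_two_eq_zero_or_one m.im with h' | h' <;> simp [h, h']

lemma psi1_norm (m : GaussianInt) : ‖psi1 m‖ ≤ 1 := by
  unfold psi1; split_ifs <;> simp

lemma psi2_norm (m : GaussianInt) : ‖psi2 m‖ ≤ 1 := by
  unfold psi2; split_ifs <;> simp

lemma tchi_per (χ : GaussianInt → GaussianInt → ℤ) (hχ : IsQuadSym χ) {l : GaussianInt}
    (hl : IsPrimary l) (a b : GaussianInt) (h : 2 * l ∣ a - b) : tchi χ l a = tchi χ l b := by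
  have h2 := (dvd_mul_right 2 l).trans h
  have hl' := (dvd_mul_left l 2).trans h
  unfold tchi
  rw [(chi_props χ hχ l (primary_odd hl)).1 a b hl', psi1_per h2, psi2_per h2]

lemma tchi_norm (χ : GaussianInt → GaussianInt → ℤ) (hχ : IsQuadSym χ) {l : GaussianInt}
    (hl : IsPrimary l) (a : GaussianInt) : ‖tchi χ l a‖ ≤ 1 := by
  unfold tchi
  rw [norm_mul]
  have h1 : ‖(if IsTypeOne l then psi1 a else psi2 a)‖ ≤ 1 := by
    split_ifs
    · exact psi1_norm a
    · exact psi2_norm a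
  have h2 : ‖(χ a l : ℂ)‖ ≤ 1 := by
    rcases (chi_props χ hχ l (primary_odd hl)).2.2.1 a with h | h | h <;> simp [h]
  exact mul_le_one₀ h1 (norm_nonneg _) h2

lemma tchi_ig (χ : GaussianInt → GaussianInt → ℤ) (hχ : IsQuadSym χ) {l : GaussianInt}
    (hl : IsPrimary l) (a : GaussianInt) : tchi χ l (ig * a) = tchi χ l a := by
  obtain ⟨-, h2, -, h4⟩ := chi_props χ hχ l (primary_odd hl)
  unfold tchi
  rw [h2, psi1_ig, psi2_ig, h4, norm_int]
  rcases (primary_iff l).mp hl with ⟨h, h'⟩ | ⟨h, h'⟩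
  · have e1 := sq_mod8_odd l.re (by omega)
    have e2 := sq_mod8_0 l.im h'
    rw [if_pos (show IsTypeOne l from ⟨h, h'⟩), if_pos (show IsTypeOne l from ⟨h, h'⟩),
      if_pos (by omega)]
    simp
  · have e1 := sq_mod8_odd l.re (by omega)
    have e2 := sq_mod8_2 l.im h'
    have hn : ¬ IsTypeOne l := by unfold IsTypeOne; omega
    rw [if_neg hn, if_neg hn, if_neg (by omega)]
    push_cast
    ring

lemma tchi_even (χ : GaussianInt → GaussianInt → ℤ) (l a : GaussianInt)
    (h : (a.re + a.im) % 2 = 0) : tchi χ l a = 0 := by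
  unfold tchi
  have h1 : psi1 a = 0 := by rw [psi1_eq, if_neg (by omega)]
  have h2 : psi2 a = 0 := by rw [psi2_eq, if_neg (by omega), if_neg (by omega)]
  simp [h1, h2]

/-- multiplication by `i` -/
def igEquiv : GaussianInt ≃ GaussianInt where
  toFun m := ig * m
  invFun m := -(ig * m)
  left_inv m := by
    have := ig_sq
    linear_combination -m * this
  right_inv m := by
    have := ig_sq
    linear_combination -m * this

/-- restriction to primary elements -/
def Hp (F : GaussianInt → ℂ) (n : GaussianInt) : ℂ := if IsPrimary n then F n else 0

lemma Hp_pos (F : GaussianInt → ℂ) {n : GaussianInt} (h : IsPrimary n) : Hp F n = F n := if_pos h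

lemma Hp_neg (F : GaussianInt → ℂ) {n : GaussianInt} (h : ¬ IsPrimary n) : Hp F n = 0 := if_neg h

lemma Hp_eq_indicator (F : GaussianInt → ℂ) : Hp F = Set.indicator {n | IsPrimary n} F := by
  ext n
  by_cases h : IsPrimary n
  · rw [Hp_pos F h, Set.indicator_of_mem (s := {n | IsPrimary n}) h]
  · rw [Hp_neg F h, Set.indicator_of_notMem (s := {n | IsPrimary n}) h]

lemma Hp_decomp (F : GaussianInt → ℂ) (hi : ∀ n, F (ig * n) = F n)
    (he : ∀ n : GaussianInt, (n.re + n.im) % 2 = 0 → F n = 0) (n : GaussianInt) :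
    F n = Hp F n + Hp F (ig * n) + Hp F (ig * (ig * n)) + Hp F (ig * (ig * (ig * n))) := by
  have p0 := primary_iff n
  have p1 := primary_iff (ig * n)
  have p2 := primary_iff (ig * (ig * n))
  have p3 := primary_iff (ig * (ig * (ig * n)))
  simp only [ig_mul_re, ig_mul_im] at p1 p2 p3
  by_cases h : (n.re + n.im) % 2 = 0
  · rw [Hp_neg F (by rw [p0]; omega), Hp_neg F (by rw [p1]; omega), Hp_neg F (by rw [p2]; omega),
      Hp_neg F (by rw [p3]; omega), he n h]
    ring
  · by_cases q0 : IsPrimary n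
    · have q0' := p0.mp q0
      rw [Hp_pos F q0, Hp_neg F (by rw [p1]; omega), Hp_neg F (by rw [p2]; omega),
        Hp_neg F (by rw [p3]; omega)]
      ring
    · have q0' := (not_congr p0).mp q0
      by_cases q1 : IsPrimary (ig * n)
      · have q1' := p1.mp q1
        rw [Hp_neg F q0, Hp_pos F q1, Hp_neg F (by rw [p2]; omega),
          Hp_neg F (by rw [p3]; omega), hi]
        ring
      · have q1' := (not_congr p1).mp q1
        by_cases q2 : IsPrimary (ig * (ig * n))
        · have q2' := p2.mp q2
          rw [Hp_neg F q0, Hp_neg F q1, Hp_pos F q2, Hp_neg F (by rw [p3]; omega), hi, hi]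
          ring
        · have q2' := (not_congr p2).mp q2
          rw [Hp_neg F q0, Hp_neg F q1, Hp_neg F q2, Hp_pos F (by rw [p3]; omega), hi, hi, hi]
          ring

lemma summable_ig (H : GaussianInt → ℂ) (hH : Summable H) : Summable fun n => H (ig * n) :=
  hH.comp_injective igEquiv.injective

lemma tsum_ig (H : GaussianInt → ℂ) : ∑' n, H (ig * n) = ∑' n, H n := igEquiv.tsum_eq H

lemma tsum_primary (F : GaussianInt → ℂ) (hF : Summable F) (hi : ∀ n, F (ig * n) = F n)
    (he : ∀ n : GaussianInt, (n.re + n.im) % 2 = 0 → F n = 0) :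
    ∑' n, F n = 4 * ∑' n : {n : GaussianInt // IsPrimary n}, F n.1 := by
  have hH : Summable (Hp F) := by rw [Hp_eq_indicator]; exact hF.indicator _
  have hsub : ∑' n : {n : GaussianInt // IsPrimary n}, F n.1 = ∑' n, Hp F n := by
    rw [Hp_eq_indicator]
    exact tsum_subtype {n | IsPrimary n} F
  rw [hsub]
  generalize hHp : Hp F = H at hH ⊢
  have hpt := Hp_decomp F hi he
  rw [hHp] at hpt
  clear hHp hsub
  have hH1 := summable_ig _ hH
  have hH2 := summable_ig _ hH1
  have hH3 := summable_ig _ hH2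
  have t1 := tsum_ig H
  have t2 := tsum_ig (fun n => H (ig * n))
  have t3 := tsum_ig (fun n => H (ig * (ig * n)))
  rw [tsum_congr hpt, Summable.tsum_add ((hH.add hH1).add hH2) hH3,
    Summable.tsum_add (hH.add hH1) hH2, Summable.tsum_add hH hH1, t3, t2, t1]
  ring

lemma mobius_bound (μ : GaussianInt → ℤ) (hμ : IsMobiusG μ) (k : GaussianInt) :
    k ≠ 0 → ‖(μ k : ℂ)‖ ≤ 1 := by
  obtain ⟨m1, m2, m3, m4⟩ := hμ
  induction k using UniqueFactorizationMonoid.induction_on_coprime with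
  | h0 => intro h; exact absurd rfl h
  | h1 hu =>
    rename_i u
    intro _
    have hu' : IsUnit u := hu
    obtain ⟨v, hv⟩ := hu'.exists_right_inv
    have h := m2 u v ⟨v, 0, by rw [zero_mul, add_zero, mul_comm, hv]⟩
    rw [hv, m1] at h
    rcases Int.isUnit_iff.mp (IsUnit.of_mul_eq_one _ h.symm) with h | h <;> simp [h]
  | hpr i hp =>
    rename_i p
    intro _
    rcases Nat.lt_or_ge i 2 with h | h
    · interval_cases i
      · simp [m1]
      · simp [m3 p hp]
    · simp [m4 p i hp h]
  | hcp hxy ix iy =>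
    rename_i x y
    intro h
    rw [m2 x y (isRelPrime_iff_isCoprime.mp hxy)]
    push_cast
    rw [norm_mul]
    exact mul_le_one₀ (ix (left_ne_zero_of_mul h)) (norm_nonneg _) (iy (right_ne_zero_of_mul h))

lemma two_mul_ne {l : GaussianInt} (hl : l ≠ 0) : 2 * l ≠ 0 := by
  refine mul_ne_zero ?_ hl
  decide

lemma Nm_two_mul (m k : GaussianInt) : Nm (2 * (m * k)) = 4 * (Nm m * Nm k) := by
  rw [Nm_mul, Nm_mul]
  have : Nm 2 = 4 := by
    have h : Zsqrtd.norm (2 : GaussianInt) = 4 := by decide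
    unfold Nm; rw [h]; norm_num
  rw [this]

lemma Nm_ig (n : GaussianInt) : Nm (ig * n) = Nm n := by
  rw [Nm_eq, Nm_eq, ig_mul_re, ig_mul_im]; push_cast; ring

lemma G_bound (χ : GaussianInt → GaussianInt → ℤ) (hχ : IsQuadSym χ) {m k : GaussianInt}
    (hl : IsPrimary (m * k)) (g : GaussianInt → ℂ)
    (hG : IsGaussSumChar (2 * (m * k)) (tchi χ (m * k)) g) (q : GaussianInt) :
    ‖g q‖ ≤ 36 * (Nm m * Nm k) := by
  obtain ⟨S, hS, hc⟩ := exists_res (2 * (m * k)) (two_mul_ne (primary_ne_zero hl))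
  rw [hG q S hS]
  rw [Nm_two_mul] at hc
  have h1 : ‖∑ x ∈ S, tchi χ (m * k) x *
      eT (GaussianInt.toComplex (q * x) / GaussianInt.toComplex (2 * (m * k)))‖ ≤ S.card • (1 : ℝ) := by
    refine (norm_sum_le S _).trans (Finset.sum_le_card_nsmul S _ 1 fun x _ => ?_)
    rw [norm_mul, eT_norm, mul_one]
    exact tchi_norm χ hχ hl x
  rw [nsmul_eq_mul, mul_one] at h1
  linarith

lemma FE_term (χ : GaussianInt → GaussianInt → ℤ) (hχ : IsQuadSym χ) {l : GaussianInt}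
    (hl : IsPrimary l) (L : ℂ → ℂ) (hL : Differentiable ℂ L)
    (hser : ∀ s : ℂ, 1 < s.re →
      L s = ∑' m : {m : GaussianInt // IsPrimary m}, tchi χ l m.1 / (Nm m.1 : ℂ) ^ s)
    (g : GaussianInt → ℂ) (hG : IsGaussSumChar (2 * l) (tchi χ l) g)
    (s : ℂ) (hs : s.re < 0) :
    4 * L s = (Nm (2 * l) : ℂ) ^ (-s) *
      ((π:ℂ) ^ (2 * s - 1) * Complex.Gamma (1 - s) / Complex.Gamma s) *
      ∑' q : {q : GaussianInt // q ≠ 0}, g q.1 / (Nm q.1 : ℂ) ^ (1 - s) := by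
  obtain ⟨S, hS, -⟩ := exists_res (2 * l) (two_mul_ne (primary_ne_zero hl))
  have h := FE_general (2 * l) (two_mul_ne (primary_ne_zero hl)) (tchi χ l)
    (tchi_per χ hχ hl) (tchi_norm χ hχ hl) (fun s => 4 * L s) (hL.const_mul 4) ?_ S hS s hs
  · rw [h]
    congr 1
    have e : ∀ q, (∑ x ∈ S, tchi χ l x *
        eT (GaussianInt.toComplex (q * x) / GaussianInt.toComplex (2 * l))) = g q :=
      fun q => (hG q S hS).symm
    simp only [e]
    symm
    refine tsum_subtype_eq_of_support_subset (f := fun q => g q / (Nm q : ℂ) ^ (1 - s))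
      (s := {q : GaussianInt | q ≠ 0}) ?_
    intro q hq
    rw [Set.mem_setOf_eq]
    rintro rfl
    apply hq
    have h1 : (1 - s) ≠ 0 := by
      intro h0
      have := congrArg Complex.re h0
      simp at this
      linarith
    simp only
    rw [Nm_zero, Complex.ofReal_zero, Complex.zero_cpow h1, div_zero]
  · intro s hs
    rw [hser s hs]
    symm
    refine tsum_primary (fun n => tchi χ l n / (Nm n : ℂ) ^ s)
      (summable_f_Nm _ 1 (tchi_norm χ hχ hl) s hs) ?_ ?_
    · intro n
      rw [tchi_ig χ hχ hl, Nm_ig]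
    · intro n hn
      rw [tchi_even χ l n hn, zero_div]

lemma summable_prod3 (f g h : GaussianInt → ℝ) (hf : Summable f) (hg : Summable g)
    (hh : Summable h) (f0 : ∀ n, 0 ≤ f n) (g0 : ∀ n, 0 ≤ g n) (h0 : ∀ n, 0 ≤ h n) :
    Summable fun x : GaussianInt × (GaussianInt × GaussianInt) => f x.1 * (g x.2.1 * h x.2.2) :=
  Summable.mul_of_nonneg hf (Summable.mul_of_nonneg hg hh g0 h0) f0
    (fun x => mul_nonneg (g0 _) (h0 _))

lemma pq_inj : Function.Injective (fun pq : {k : GaussianInt // k ≠ 0} × NSqPairs =>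
      ((pq.1.1, pq.2.1) : GaussianInt × (GaussianInt × GaussianInt))) :=
  Function.Injective.prodMap Subtype.val_injective Subtype.val_injective

lemma summable_prod3' (f g h : GaussianInt → ℝ) (hf : Summable f) (hg : Summable g)
    (hh : Summable h) (f0 : ∀ n, 0 ≤ f n) (g0 : ∀ n, 0 ≤ g n) (h0 : ∀ n, 0 ≤ h n) :
    Summable fun pq : {k : GaussianInt // k ≠ 0} × NSqPairs =>
      36 * (f pq.1.1 * (g pq.2.1.1 * h pq.2.1.2)) :=
  ((summable_prod3 f g h hf hg hh f0 g0 h0).comp_injective pq_inj).mul_left 36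

lemma inv_nonneg_Nm (σ : ℝ) (n : GaussianInt) : 0 ≤ 1 / (Nm n) ^ σ :=
    div_nonneg zero_le_one (Real.rpow_nonneg (Nm_nonneg n) _)

lemma bound_summable (a b c : ℝ) (ha : 1 < a) (hb : 1 < b) (hc : 1 < c) :
    Summable fun pq : {k : GaussianInt // k ≠ 0} × NSqPairs =>
      36 * ((1 / (Nm pq.1.1) ^ a) * ((1 / (Nm pq.2.1.1) ^ b) * (1 / (Nm pq.2.1.2) ^ c))) :=
  summable_prod3' (fun n => 1 / (Nm n) ^ a) (fun n => 1 / (Nm n) ^ b) (fun n => 1 / (Nm n) ^ c)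
    (summable_Nm ha) (summable_Nm hb) (summable_Nm hc) (inv_nonneg_Nm a) (inv_nonneg_Nm b)
    (inv_nonneg_Nm c)

lemma bound_term (mu g : ℂ) (q m k : ℝ) (hq : 0 < q) (hm : 0 < m) (hk : 0 < k)
    (h1 : ‖mu‖ ≤ 1) (h2 : ‖g‖ ≤ 36 * (m * k)) (a b c : ℂ) :
    ‖mu * g / ((q : ℂ) ^ a * (m : ℂ) ^ b * (k : ℂ) ^ c)‖ ≤
      36 * ((1 / q ^ a.re) * ((1 / m ^ (b.re - 1)) * (1 / k ^ (c.re - 1)))) := by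
  rw [norm_div, norm_mul, norm_mul, norm_mul, Complex.norm_cpow_eq_rpow_re_of_pos hq,
    Complex.norm_cpow_eq_rpow_re_of_pos hm, Complex.norm_cpow_eq_rpow_re_of_pos hk,
    Real.rpow_sub_one hm.ne', Real.rpow_sub_one hk.ne']
  have p1 := Real.rpow_pos_of_pos hq a.re
  have p2 := Real.rpow_pos_of_pos hm b.re
  have p3 := Real.rpow_pos_of_pos hk c.re
  have h3 : ‖mu‖ * ‖g‖ ≤ 36 * (m * k) := by
    calc ‖mu‖ * ‖g‖ ≤ 1 * (36 * (m * k)) := by gcongr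
      _ = _ := one_mul _
  calc ‖mu‖ * ‖g‖ / (q ^ a.re * m ^ b.re * k ^ c.re)
      ≤ 36 * (m * k) / (q ^ a.re * m ^ b.re * k ^ c.re) := by gcongr
    _ = _ := by field_simp

lemma term_algebra (s w z mu L T P Ga Gb : ℂ) (m k : ℝ) (hm : 0 < m) (hk : 0 < k)
    (h : 4 * L = ((4 * (m * k) : ℝ) : ℂ) ^ (-s) * (P * Ga / Gb) * T) :
    mu * L / ((m : ℂ) ^ w * (k : ℂ) ^ z) =
      (4 : ℂ) ^ (-s) * P * Ga / (4 * Gb) *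
        (mu / ((m : ℂ) ^ (s + w) * (k : ℂ) ^ (s + z)) * T) := by
  have hm0 : (m : ℂ) ≠ 0 := by exact_mod_cast hm.ne'
  have hk0 : (k : ℂ) ≠ 0 := by exact_mod_cast hk.ne'
  have e : ((4 * (m * k) : ℝ) : ℂ) ^ (-s) = (4 : ℂ) ^ (-s) * (((m : ℂ) ^ s)⁻¹ * ((k : ℂ) ^ s)⁻¹) := by
    rw [Complex.ofReal_mul, Complex.mul_cpow_ofReal_nonneg (by norm_num) (by positivity),
      Complex.ofReal_mul, Complex.mul_cpow_ofReal_nonneg hm.le hk.le, Complex.cpow_neg (m : ℂ),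
      Complex.cpow_neg (k : ℂ)]
    norm_num
  have hL : L = (4 : ℂ) ^ (-s) * (((m : ℂ) ^ s)⁻¹ * ((k : ℂ) ^ s)⁻¹) * (P * Ga / Gb) * T / 4 := by
    rw [← e, ← h]; ring
  rw [hL, Complex.cpow_add _ _ hm0, Complex.cpow_add _ _ hk0]
  simp only [div_eq_mul_inv, mul_inv]
  ring

/-- the functional equation (3.9) of the paper,
`A₂(s,w,z) = (4^{−s} π^{2s−1} Γ(1−s)/(4Γ(s))) C(1−s, s+w, s+z)`, stated in a region where
both series converge. -/
theorem A2_functional_equation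
    (χ : GaussianInt → GaussianInt → ℤ) (hχ : IsQuadSym χ)
    (μ : GaussianInt → ℤ) (hμ : IsMobiusG μ)
    (Lt : ℂ → GaussianInt → ℂ)
    (hser : ∀ l : GaussianInt, IsPrimary l → ∀ s : ℂ, 1 < s.re →
      Lt s l = ∑' m : {m : GaussianInt // IsPrimary m}, tchi χ l m.1 / (Nm m.1 : ℂ) ^ s)
    (hdiff : ∀ l : GaussianInt, IsPrimary l → (¬ ∃ r : GaussianInt, l = r ^ 2) →
      Differentiable ℂ (fun s => Lt s l))
    (G : GaussianInt → GaussianInt → ℂ)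
    (hG : ∀ l : GaussianInt, IsPrimary l → IsGaussSumChar (2 * l) (tchi χ l) (fun q => G q l)) :
    ∀ s w z : ℂ, s.re < -1 → 3 < (s + w).re → 3 < (s + z).re →
      (∑' p : NSqPairs,
          (μ p.1.2 : ℂ) * Lt s (p.1.1 * p.1.2) / ((Nm p.1.1 : ℂ) ^ w * (Nm p.1.2 : ℂ) ^ z)) =
        (4 : ℂ) ^ (-s) * (Real.pi : ℂ) ^ (2 * s - 1) * Complex.Gamma (1 - s) /
            (4 * Complex.Gamma s) *
          ∑' pq : {k : GaussianInt // k ≠ 0} × NSqPairs,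
            (μ pq.2.1.2 : ℂ) * G pq.1.1 (pq.2.1.1 * pq.2.1.2) /
              ((Nm pq.1.1 : ℂ) ^ (1 - s) * (Nm pq.2.1.1 : ℂ) ^ (s + w) *
                (Nm pq.2.1.2 : ℂ) ^ (s + z)) := by
  intro s w z hs hw hz
  have hsum : Summable fun pq : {k : GaussianInt // k ≠ 0} × NSqPairs =>
            (μ pq.2.1.2 : ℂ) * G pq.1.1 (pq.2.1.1 * pq.2.1.2) /
              ((Nm pq.1.1 : ℂ) ^ (1 - s) * (Nm pq.2.1.1 : ℂ) ^ (s + w) *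
                (Nm pq.2.1.2 : ℂ) ^ (s + z)) := by
    refine Summable.of_norm_bounded (bound_summable (1 - s).re ((s + w).re - 1) ((s + z).re - 1)
      (by rw [Complex.sub_re, Complex.one_re]; linarith) (by linarith) (by linarith)) ?_
    rintro ⟨⟨q, hq⟩, ⟨⟨m, k⟩, hm, hk, hns⟩⟩
    have hl := primary_mul hm hk
    exact bound_term _ _ _ _ _ (Nm_pos hq) (Nm_pos (primary_ne_zero hm))
      (Nm_pos (primary_ne_zero hk)) (mobius_bound μ hμ k (primary_ne_zero hk))
      (G_bound χ hχ hl _ (hG _ hl) q) _ _ _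
  have hswap : ∑' pq : {k : GaussianInt // k ≠ 0} × NSqPairs,
            (μ pq.2.1.2 : ℂ) * G pq.1.1 (pq.2.1.1 * pq.2.1.2) /
              ((Nm pq.1.1 : ℂ) ^ (1 - s) * (Nm pq.2.1.1 : ℂ) ^ (s + w) *
                (Nm pq.2.1.2 : ℂ) ^ (s + z)) =
      ∑' p : NSqPairs, ∑' q : {k : GaussianInt // k ≠ 0},
            (μ p.1.2 : ℂ) * G q.1 (p.1.1 * p.1.2) /
              ((Nm q.1 : ℂ) ^ (1 - s) * (Nm p.1.1 : ℂ) ^ (s + w) *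
                (Nm p.1.2 : ℂ) ^ (s + z)) := by
    rw [← (Equiv.prodComm NSqPairs {k : GaussianInt // k ≠ 0}).tsum_eq]
    exact ((Equiv.prodComm NSqPairs {k : GaussianInt // k ≠ 0}).summable_iff.mpr hsum).tsum_prod
  rw [hswap, ← tsum_mul_left]
  refine tsum_congr ?_
  rintro ⟨⟨m, k⟩, hm, hk, hns⟩
  have hl := primary_mul hm hk
  have h := FE_term χ hχ hl (fun s => Lt s (m * k)) (hdiff _ hl hns) (hser _ hl)
    (fun q => G q (m * k)) (hG _ hl) s (by linarith)
  rw [Nm_two_mul] at h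
  have h' := term_algebra s w z (μ k : ℂ) _ _ _ _ _ _ _ (Nm_pos (primary_ne_zero hm))
    (Nm_pos (primary_ne_zero hk)) h
  simp only at h' ⊢
  rw [h', ← tsum_mul_left]
  congr 1
  refine tsum_congr fun q => ?_
  simp only [div_eq_mul_inv, mul_inv]
  ring
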